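/- Let X be an infinite separable locally compact metric space, let f : X → X be a continuous weakly mixing map, and let β denote the diameter of X (β = ∞ if X is unbounded). Then there exist countably infinitely many pairwise disjoint Cantor sets S⁽¹⁾, S⁽²⁾, S⁽³⁾, … of totally transitive points of f whose union S = ⋃_{j≥1} S⁽ʲ⁾ is dense in X and is a β-scrambled set of fⁿ for every n ≥ 1: for all distinct x, y ∈ S and every n ≥ 1, liminf_{k→∞} ρ(f^{nk}(x), f^{nk}(y)) = 0 and limsup_{k→∞} ρ(f^{nk}(x), f^{nk}(y)) ≥ β (interpreted in [0,∞], e.g. via the extended distance, when β = ∞). -/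

import Mathlib

open Filter ENNReal

/-- `f` is (topologically) weakly mixing. -/
def WeaklyMixing {X : Type*} [TopologicalSpace X] (f : X → X) : Prop :=
  ∀ U₁ U₂ V₁ V₂ : Set X, IsOpen U₁ → IsOpen U₂ → IsOpen V₁ → IsOpen V₂ →
    U₁.Nonempty → U₂.Nonempty → V₁.Nonempty → V₂.Nonempty →
    ∃ n : ℕ, 1 ≤ n ∧ (f^[n] '' U₁ ∩ V₁).Nonempty ∧ (f^[n] '' U₂ ∩ V₂).Nonempty

/-- A Cantor set: a nonempty compact, perfect, totally disconnected subset. -/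
def IsCantorSet {X : Type*} [TopologicalSpace X] (C : Set X) : Prop :=
  C.Nonempty ∧ IsCompact C ∧ Perfect C ∧ IsTotallyDisconnected C

/-- `x` is a totally transitive point of `g`. -/
def TotallyTransitivePoint {Y : Type*} [TopologicalSpace Y] (g : Y → Y) (x : Y) : Prop :=
  ∀ k : ℕ, 1 ≤ k → Dense (Set.range fun m : ℕ => g^[k * m] x)

/-!
Weak mixing says that `f × f` is topologically transitive. By Furstenberg's intersection lemma the
sets of hitting times `N(U, V)` form a filter base, so they contain arbitrarily long runs of
integers; hence `f × f` is even totally transitive, and the pairs `(x, y)` that are totally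
transitive points of `f × f` form a residual set `R ⊆ X × X`. For such a pair and every `n`, the
sequence `(f^{nk}(x), f^{nk}(y))` clusters at every point of `X × X`: clustering at the diagonal
gives `liminf = 0`, clustering at pairs of distant points gives `limsup ≥ β`.

By a Mycielski-type argument, a generic continuous map `φ` from `ℕ × 2^ℕ` to `X` (for the topology
of uniform convergence on compact sets) has dense range and sends all pairs of distinct points
into `R`. In particular `φ` is injective, and the sets `φ({j} × 2^ℕ)` are the required Cantor sets.
-/

section

open Set Topology Uniformity TopologicalSpace

section Hitting

variable {X : Type*}

/-- The set of times at which the iterates of `f` carry some point of `U` into `V`, usually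
written `N(U, V)`. -/
def hittingTimes (f : X → X) (U V : Set X) : Set ℕ :=
  {n | (U ∩ f^[n] ⁻¹' V).Nonempty}

/-- Total transitivity: every power of `f` moves any nonempty open set into any other. -/
def TotallyTransitive [TopologicalSpace X] (f : X → X) : Prop :=
  ∀ m : ℕ, 1 ≤ m → ∀ U V : Set X, IsOpen U → IsOpen V → U.Nonempty → V.Nonempty →
    ∃ k, m * k ∈ hittingTimes f U V

variable [TopologicalSpace X] {f : X → X} {U V U' V' : Set X}

theorem WeaklyMixing.denseRange (hwm : WeaklyMixing f) : DenseRange f := by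
  refine dense_iff_inter_open.2 fun V hV hVne => ?_
  obtain ⟨n, hn, ⟨-, ⟨x, -, rfl⟩, hx⟩, -⟩ := hwm V V V V hV hV hV hV hVne hVne hVne hVne
  obtain ⟨n, rfl⟩ := Nat.exists_eq_add_of_le' hn
  rw [Function.iterate_succ_apply'] at hx
  exact ⟨_, hx, mem_range_self _⟩

theorem denseRange_iterate (hf : Continuous f) (hd : DenseRange f) (n : ℕ) :
    DenseRange f^[n] := by
  induction n with
  | zero => exact denseRange_id
  | succ n ih => exact ih.comp hd (hf.iterate n)

theorem preimage_iterate_nonempty (hf : Continuous f) (hd : DenseRange f) (n : ℕ)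
    (hV : IsOpen V) (hVne : V.Nonempty) : (f^[n] ⁻¹' V).Nonempty :=
  (denseRange_iterate hf hd n).exists_mem_open hV hVne

theorem WeaklyMixing.exists_hittingTimes_subset_inter (hwm : WeaklyMixing f) (hf : Continuous f)
    (hU : IsOpen U) (hV : IsOpen V) (hU' : IsOpen U') (hV' : IsOpen V') (hUne : U.Nonempty)
    (hVne : V.Nonempty) (hUne' : U'.Nonempty) (hVne' : V'.Nonempty) :
    ∃ A B : Set X, IsOpen A ∧ IsOpen B ∧ A.Nonempty ∧ B.Nonempty ∧
      hittingTimes f A B ⊆ hittingTimes f U V ∩ hittingTimes f U' V' := by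
  obtain ⟨n, -, ⟨-, ⟨a, ha, rfl⟩, haU'⟩, -, ⟨b, hb, rfl⟩, hbV'⟩ :=
    hwm U V U' V' hU hV hU' hV' hUne hVne hUne' hVne'
  refine ⟨U ∩ f^[n] ⁻¹' U', V ∩ f^[n] ⁻¹' V', hU.inter (hU'.preimage (hf.iterate n)),
    hV.inter (hV'.preimage (hf.iterate n)), ⟨a, ha, haU'⟩, ⟨b, hb, hbV'⟩, ?_⟩
  rintro k ⟨x, ⟨hxU, hxU'⟩, hxV, hxV'⟩
  refine ⟨⟨x, hxU, hxV⟩, f^[n] x, hxU', ?_⟩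
  rwa [mem_preimage, Function.Commute.iterate_iterate_self f k n x]

theorem WeaklyMixing.exists_forall_add_mem_hittingTimes (hwm : WeaklyMixing f) (hf : Continuous f)
    (hU : IsOpen U) (hV : IsOpen V) (hUne : U.Nonempty) (hVne : V.Nonempty) (L : ℕ) :
    ∃ A B : Set X, IsOpen A ∧ IsOpen B ∧ A.Nonempty ∧ B.Nonempty ∧
      ∀ n ∈ hittingTimes f A B, ∀ i ≤ L, n + i ∈ hittingTimes f U V := by
  induction L with
  | zero =>
    refine ⟨U, V, hU, hV, hUne, hVne, fun n hn i hi => ?_⟩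
    rwa [Nat.le_zero.1 hi, add_zero]
  | succ L ih =>
    obtain ⟨A, B, hA, hB, hAne, hBne, hAB⟩ := ih
    obtain ⟨C, D, hC, hD, hCne, hDne, hCD⟩ := hwm.exists_hittingTimes_subset_inter hf hA hB hU
      (hV.preimage (hf.iterate (L + 1))) hAne hBne hUne
      (preimage_iterate_nonempty hf hwm.denseRange (L + 1) hV hVne)
    refine ⟨C, D, hC, hD, hCne, hDne, fun n hn i hi => ?_⟩
    obtain hi | rfl := Nat.le_succ_iff.1 hi
    · exact hAB n (hCD hn).1 i hi
    · obtain ⟨x, hxU, hxV⟩ := (hCD hn).2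
      refine ⟨x, hxU, ?_⟩
      rwa [mem_preimage, add_comm, Function.iterate_add_apply]

theorem WeaklyMixing.totallyTransitive_prodMap (hwm : WeaklyMixing f) (hf : Continuous f) :
    TotallyTransitive (Prod.map f f) := by
  rintro m hm W W' hW hW' ⟨⟨x, y⟩, hxy⟩ ⟨⟨x', y'⟩, hxy'⟩
  obtain ⟨U, V, hU, hV, hxU, hyV, hUV⟩ := isOpen_prod_iff.1 hW x y hxy
  obtain ⟨U', V', hU', hV', hxU', hyV', hUV'⟩ := isOpen_prod_iff.1 hW' x' y' hxy'
  obtain ⟨C, D, hC, hD, hCne, hDne, hCD⟩ := hwm.exists_hittingTimes_subset_inter hf hU hU' hV hV'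
    ⟨x, hxU⟩ ⟨x', hxU'⟩ ⟨y, hyV⟩ ⟨y', hyV'⟩
  obtain ⟨A, B, hA, hB, hAne, hBne, hAB⟩ :=
    hwm.exists_forall_add_mem_hittingTimes hf hC hD hCne hDne m
  obtain ⟨n, -, ⟨-, ⟨a, haA, rfl⟩, haB⟩, -⟩ := hwm A A B B hA hA hB hB hAne hAne hBne hBne
  -- The first multiple of `m` beyond `n` is at distance at most `m` from `n`, so it lies in the
  -- run of hitting times that starts at `n`.
  obtain ⟨k, i, hi, hk⟩ : ∃ k, ∃ i ≤ m, n + i = m * k := by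
    refine ⟨n / m + 1, m - n % m, Nat.sub_le _ _, ?_⟩
    have := Nat.div_add_mod n m
    have := Nat.mod_lt n hm
    rw [mul_add, mul_one]
    omega
  obtain ⟨⟨u, huU, huU'⟩, v, hvV, hvV'⟩ := hCD (hAB n ⟨a, haA, haB⟩ i hi)
  refine ⟨k, (u, v), hUV ⟨huU, hvV⟩, hUV' ?_⟩
  rw [← hk, Prod.map_iterate]
  exact ⟨huU', hvV'⟩

end Hitting

section TotallyTransitivePoint

variable {Y : Type*} [TopologicalSpace Y] {g : Y → Y} {y : Y}

theorem TotallyTransitive.eventually_residual [SecondCountableTopology Y]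
    (h : TotallyTransitive g) (hg : Continuous g) :
    ∀ᶠ y in residual Y, TotallyTransitivePoint g y := by
  have hB := isBasis_countableBasis Y
  have hvisit : ∀ᶠ y in residual Y, ∀ m : ℕ, ∀ V ∈ countableBasis Y, 1 ≤ m →
      ∃ k, g^[m * k] y ∈ V := by
    rw [eventually_countable_forall]
    intro m
    rw [eventually_countable_ball (countable_countableBasis Y)]
    intro V hV
    rw [eventually_imp_distrib_left]
    intro hm
    have hVo : IsOpen V := isOpen_of_mem_countableBasis hV
    refine residual_of_dense_open ?_ (dense_iff_inter_open.2 fun U hU hUne => ?_)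
    · rw [ofPred_exists]
      exact isOpen_iUnion fun k => hVo.preimage (hg.iterate (m * k))
    · obtain ⟨k, y, hyU, hyV⟩ :=
        h m hm U V hU hVo hUne (nonempty_of_mem_countableBasis hV)
      exact ⟨y, hyU, k, hyV⟩
  filter_upwards [hvisit] with y hy m hm
  refine hB.dense_iff.2 fun V hV _ => ?_
  obtain ⟨k, hk⟩ := hy m V hV hm
  exact ⟨_, hk, k, rfl⟩

/-- Visiting `V` after time `N` amounts to visiting the nonempty open set `(g ^ (m * N))⁻¹ V`. -/
theorem TotallyTransitivePoint.mapClusterPt (h : TotallyTransitivePoint g y) (hg : Continuous g)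
    (hd : DenseRange g) {m : ℕ} (hm : 1 ≤ m) (z : Y) :
    MapClusterPt z atTop fun k => g^[m * k] y := by
  refine ((nhds_basis_opens z).mapClusterPt_iff_frequently).2 fun V ⟨hzV, hV⟩ =>
    frequently_atTop.2 fun N => ?_
  obtain ⟨-, hk, k, rfl⟩ := (h m hm).inter_open_nonempty _ (hV.preimage (hg.iterate (m * N)))
    (preimage_iterate_nonempty hg hd (m * N) hV ⟨z, hzV⟩)
  refine ⟨N + k, Nat.le_add_right N k, ?_⟩
  rwa [mul_add, Function.iterate_add_apply]

variable {X : Type*} [TopologicalSpace X] {f : X → X} {x : X}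

theorem TotallyTransitivePoint.of_prodMap_left (h : TotallyTransitivePoint (Prod.map f g) (x, y)) :
    TotallyTransitivePoint f x := by
  intro m hm
  have : Nonempty Y := ⟨y⟩
  have hfst := Prod.fst_surjective.denseRange.comp (h m hm) continuous_fst
  simpa only [DenseRange, Function.comp_def, Prod.map_iterate, Prod.map_apply] using hfst

theorem TotallyTransitivePoint.ne_of_prodMap [T2Space X] [Nontrivial X] {x' : X}
    (h : TotallyTransitivePoint (Prod.map f f) (x, x')) : x ≠ x' := by
  rintro rfl
  obtain ⟨a, b, hab⟩ := exists_pair_ne X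
  obtain ⟨-, hk, k, rfl⟩ := (h 1 le_rfl).inter_open_nonempty _
    isClosed_diagonal.isOpen_compl ⟨(a, b), hab⟩
  simp only [Prod.map_iterate, Prod.map_apply] at hk
  exact hk rfl

end TotallyTransitivePoint

section Edist

variable {X : Type*} [PseudoEMetricSpace X] {f : X → X} {x y : X} {n : ℕ}

theorem TotallyTransitivePoint.mapClusterPt_edist (h : TotallyTransitivePoint (Prod.map f f) (x, y))
    (hf : Continuous f) (hd : DenseRange f) (hn : 1 ≤ n) (a b : X) :
    MapClusterPt (edist a b) atTop fun k => edist (f^[n * k] x) (f^[n * k] y) := by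
  have hab := h.mapClusterPt (hf.prodMap hf) (hd.prodMap hd) hn (a, b)
  simp only [Prod.map_iterate, Prod.map_apply] at hab
  exact hab.continuousAt_comp (f := fun p : X × X => edist p.1 p.2) (by fun_prop)

theorem TotallyTransitivePoint.liminf_edist_eq_zero
    (h : TotallyTransitivePoint (Prod.map f f) (x, y))
    (hf : Continuous f) (hd : DenseRange f) (hn : 1 ≤ n) :
    atTop.liminf (fun k : ℕ => edist (f^[n * k] x) (f^[n * k] y)) = 0 := by
  simpa only [edist_self, nonpos_iff_eq_zero] using (h.mapClusterPt_edist hf hd hn x x).liminf_le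

theorem TotallyTransitivePoint.ediam_le_limsup_edist
    (h : TotallyTransitivePoint (Prod.map f f) (x, y))
    (hf : Continuous f) (hd : DenseRange f) (hn : 1 ≤ n) :
    Metric.ediam (univ : Set X) ≤
      atTop.limsup (fun k : ℕ => edist (f^[n * k] x) (f^[n * k] y)) :=
  Metric.ediam_le fun a _ b _ => (h.mapClusterPt_edist hf hd hn a b).le_limsup

end Edist

section CantorSet

instance perfectSpace_pi {ι : Type*} [Infinite ι] {Y : ι → Type*} [∀ i, TopologicalSpace (Y i)]
    [∀ i, Nontrivial (Y i)] : PerfectSpace (∀ i, Y i) := by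
  classical
  refine perfectSpace_iff_forall_not_isolated.2 fun σ => ?_
  choose v hv using fun i => exists_ne (σ i)
  have hne (i : ι) : Function.update σ i (v i) ≠ σ := fun h => hv i (by simpa using congrFun h i)
  have hlim : Tendsto (fun i => Function.update σ i (v i)) cofinite (𝓝 σ) := by
    refine tendsto_pi_nhds.2 fun k => tendsto_const_nhds.congr' ?_
    filter_upwards [eventually_cofinite_ne k] with i hi
    rw [Function.update_of_ne hi.symm]
  exact (tendsto_nhdsWithin_iff.2 ⟨hlim, .of_forall hne⟩).neBot

theorem isCantorSet_range {X Y : Type*} [TopologicalSpace X] [T2Space X] [TopologicalSpace Y]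
    [Nonempty Y] [CompactSpace Y] [PerfectSpace Y] [TotallyDisconnectedSpace Y] {φ : Y → X}
    (hφ : Continuous φ) (hinj : Function.Injective φ) : IsCantorSet (range φ) := by
  refine ⟨range_nonempty φ, isCompact_range hφ, ⟨(isCompact_range hφ).isClosed, ?_⟩,
    (hφ.isClosedEmbedding hinj).isEmbedding.isTotallyDisconnected_range.2 inferInstance⟩
  rintro - ⟨y, rfl⟩
  have hy : AccPt y (𝓟 univ) := PerfectSpace.univ_preperfect y (mem_univ y)
  simpa only [map_principal, image_univ] using hy.map hφ.continuousAt hinj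

end CantorSet

section Polish

theorem isOpen_range_of_isDenseInducing {X Y : Type*} [TopologicalSpace X] [LocallyCompactSpace X]
    [TopologicalSpace Y] [T2Space Y] {i : X → Y} (hi : IsDenseInducing i) : IsOpen (range i) := by
  rw [isOpen_iff_mem_nhds]
  rintro - ⟨x, rfl⟩
  obtain ⟨K, hK, hKx⟩ := exists_compact_mem_nhds x
  rw [hi.isInducing.nhds_eq_comap] at hKx
  obtain ⟨W, ⟨hxW, hW⟩, hWK⟩ := ((nhds_basis_opens (i x)).comap i).mem_iff.1 hKx
  filter_upwards [hW.mem_nhds hxW] with y hy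
  have hiK : IsClosed (i '' K) := (hK.image hi.continuous).isClosed
  exact image_subset_range i K <| closure_minimal (image_mono hWK) hiK <|
    hi.dense.subset_closure_image_preimage_of_isOpen hW hy

theorem polishSpace_of_locallyCompactSpace (X : Type*) [TopologicalSpace X] [T2Space X]
    [SecondCountableTopology X] [LocallyCompactSpace X] : PolishSpace X := by
  let := metrizableSpaceMetric X
  have hopen : IsOpen (range ((↑) : X → UniformSpace.Completion X)) :=
    isOpen_range_of_isDenseInducing UniformSpace.Completion.isDenseInducing_coe
  have := hopen.polishSpace
  let e := UniformSpace.Completion.isDenseEmbedding_coe.isEmbedding.toHomeomorph (X := X)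
  exact e.isClosedEmbedding.polishSpace

end Polish

section Mycielski

variable {Z X : Type*} [TopologicalSpace Z]

theorem continuous_piecewise_of_isClopen [TopologicalSpace X] {U : Set Z} [∀ z, Decidable (z ∈ U)]
    (hU : IsClopen U) {f g : Z → X} (hf : Continuous f) (hg : Continuous g) :
    Continuous (U.piecewise f g) :=
  hf.piecewise (by simp [hU.frontier_eq]) hg

theorem exists_isClopen_finite_approximation [UniformSpace X] [Nonempty X]
    (hZ : IsTopologicalBasis {U : Set Z | IsClopen U}) (φ : C(Z, X)) {K : Set Z}
    (hK : IsCompact K) {E : Set (X × X)} (hE : E ∈ 𝓤 X) :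
    ∃ W, K ⊆ W ∧ IsClopen W ∧ ∃ (n : ℕ) (g : Z → Fin n) (h : Fin n → X),
      Continuous g ∧ ∀ z ∈ W, (φ z, h (g z)) ∈ E := by
  classical
  refine hK.induction_on ?_ ?_ ?_ ?_
  · exact ⟨∅, subset_rfl, isClopen_empty, 1, fun _ => 0, fun _ => Classical.arbitrary X,
      continuous_const, fun _ hz => hz.elim⟩
  · rintro s t hst ⟨W, htW, hW⟩
    exact ⟨W, hst.trans htW, hW⟩
  · rintro s t ⟨W₁, hsW, hW₁, n₁, g₁, h₁, hg₁, hgh₁⟩ ⟨W₂, htW, hW₂, n₂, g₂, h₂, hg₂, hgh₂⟩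
    refine ⟨W₁ ∪ W₂, union_subset_union hsW htW, hW₁.union hW₂, n₁ + n₂,
      W₁.piecewise (Fin.castAdd n₂ ∘ g₁) (Fin.natAdd n₁ ∘ g₂), Fin.append h₁ h₂,
      continuous_piecewise_of_isClopen hW₁ (continuous_of_discreteTopology.comp hg₁)
        (continuous_of_discreteTopology.comp hg₂), fun z hz => ?_⟩
    by_cases hz₁ : z ∈ W₁
    · simpa [hz₁] using hgh₁ z hz₁
    · simpa [hz₁] using hgh₂ z (hz.resolve_left hz₁)
  · intro z _
    have hnear : {w | (φ w, φ z) ∈ E} ∈ 𝓝 z :=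
      φ.continuous.continuousAt.preimage_mem_nhds (mem_nhds_right (φ z) hE)
    obtain ⟨W, hW, hzW, hWE⟩ := hZ.mem_nhds_iff.1 hnear
    exact ⟨W, mem_nhdsWithin_of_mem_nhds (hW.isOpen.mem_nhds hzW), W, subset_rfl, hW,
      1, fun _ => 0, fun _ => φ z, continuous_const, fun w hw => hWE hw⟩

theorem exists_pi_mem_of_residual [TopologicalSpace X] [IsCompletelyMetrizableSpace X]
    {R : Set (X × X)} (hR : R ∈ residual (X × X)) {ι : Type*} [Finite ι] {U : ι → Set X}
    (hU : ∀ i, IsOpen (U i)) (hUne : ∀ i, (U i).Nonempty) :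
    ∃ x y : ι → X, (∀ i, x i ∈ U i ∧ y i ∈ U i) ∧ ∀ i j, (x i, y j) ∈ R := by
  have hres : ∀ᶠ p : (ι → X) × (ι → X) in residual _, ∀ i j, (p.1 i, p.2 j) ∈ R :=
    eventually_countable_forall.2 fun i => eventually_countable_forall.2 fun j =>
      (tendsto_residual_of_isOpenMap ((continuous_apply i).prodMap (continuous_apply j))
        ((isOpenMap_eval i).prodMap (isOpenMap_eval j))).eventually hR
  have hbox : IsOpen (univ.pi U) := isOpen_set_pi finite_univ fun i _ => hU i
  have hboxne : (univ.pi U).Nonempty := univ_pi_nonempty_iff.2 hUne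
  obtain ⟨⟨x, y⟩, ⟨hx, hy⟩, hxy⟩ := (dense_of_mem_residual hres).inter_open_nonempty _
    (hbox.prod hbox) (hboxne.prod hboxne)
  exact ⟨x, y, fun i => ⟨hx i trivial, hy i trivial⟩, hxy⟩

theorem dense_of_forall_isCompact_uniformity [UniformSpace X] {s : Set C(Z, X)}
    (h : ∀ (φ : C(Z, X)) (K : Set Z), IsCompact K → ∀ E ∈ 𝓤 X,
      ∃ ψ ∈ s, ∀ z ∈ K, (φ z, ψ z) ∈ E) : Dense s := fun φ => by
  refine (mem_closure_iff_nhds_basis <| nhds_basis_uniformity'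
    ContinuousMap.hasBasis_compactConvergenceUniformity).2 fun ⟨K, E⟩ ⟨hK, hE⟩ => ?_
  exact h φ K hK E hE

theorem dense_setOf_forall_mem_notMem_of_isClopen [TopologicalSpace X]
    [IsCompletelyMetrizableSpace X] [Nonempty X] (hZ : IsTopologicalBasis {U : Set Z | IsClopen U})
    {R : Set (X × X)} (hR : R ∈ residual (X × X)) {U : Set Z} (hU : IsClopen U) :
    Dense {φ : C(Z, X) | ∀ z ∈ U, ∀ w ∉ U, (φ z, φ w) ∈ R} := by
  classical
  let := upgradeIsCompletelyMetrizable X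
  refine dense_of_forall_isCompact_uniformity fun φ K hK E hE => ?_
  obtain ⟨D, hD, hcomp⟩ := comp_mem_uniformity_sets hE
  obtain ⟨W, hKW, -, n, g, h, hg, hgh⟩ := exists_isClopen_finite_approximation hZ φ hK hD
  -- A map taking finitely many values leaves finitely many conditions `(x i, y j) ∈ R`, where even
  -- for `i = j` the values `x i` and `y i` can be moved independently.
  obtain ⟨x, y, hxy, hR⟩ := exists_pi_mem_of_residual hR
    (U := fun i => interior (UniformSpace.ball (h i) D)) (fun i => isOpen_interior)
    (fun i => ⟨h i, mem_interior_iff_mem_nhds.2 (UniformSpace.ball_mem_nhds (h i) hD)⟩)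
  have hcont (v : Fin n → X) : Continuous (v ∘ g) := continuous_of_discreteTopology.comp hg
  refine ⟨⟨U.piecewise (x ∘ g) (y ∘ g),
    continuous_piecewise_of_isClopen hU (hcont x) (hcont y)⟩, fun z hz w hw => ?_, fun z hz => ?_⟩
  · simpa [hz, hw] using hR (g z) (g w)
  · have hnear : U.piecewise (x ∘ g) (y ∘ g) z ∈ UniformSpace.ball (h (g z)) D := by
      by_cases hzU : z ∈ U
      · simpa [hzU] using interior_subset (hxy (g z)).1
      · simpa [hzU] using interior_subset (hxy (g z)).2
    exact hcomp ⟨_, hgh z (hKW hz), hnear⟩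

theorem isOpen_setOf_forall_isCompact_mem [TopologicalSpace X] [LocallyCompactSpace Z]
    {A B : Set Z} (hA : IsCompact A) (hB : IsCompact B) {G : Set (X × X)} (hG : IsOpen G) :
    IsOpen {φ : C(Z, X) | ∀ z ∈ A, ∀ w ∈ B, (φ z, φ w) ∈ G} := by
  have hcont : Continuous fun φ : C(Z, X) => φ.prodMap φ :=
    ContinuousMap.continuous_of_continuous_uncurry _ <|
      (by fun_prop : Continuous fun p : C(Z, X) × (Z × Z) => (p.1 p.2.1, p.1 p.2.2))
  convert! (ContinuousMap.isOpen_setOfPred_mapsTo (hA.prod hB) hG).preimage hcont using 1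
  ext φ
  exact ⟨fun h p hp => h p.1 hp.1 p.2 hp.2, fun h z hz w hw => h (x := (z, w)) ⟨hz, hw⟩⟩

theorem eventually_residual_pairwise_mem [TopologicalSpace X] [IsCompletelyMetrizableSpace X]
    [Nonempty X] [T2Space Z] [LocallyCompactSpace Z] [TotallyDisconnectedSpace Z]
    [SecondCountableTopology Z] {R : Set (X × X)} (hR : R ∈ residual (X × X)) :
    ∀ᶠ φ : C(Z, X) in residual _, Pairwise fun z w => (φ z, φ w) ∈ R := by
  have hZ := loc_compact_Haus_tot_disc_of_zero_dim (H := Z)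
  obtain ⟨𝒢, hopen, hdense, hcount, h𝒢⟩ := mem_residual_iff.1 hR
  obtain ⟨𝒰, hclopen, hcount', hbasis⟩ := hZ.exists_countable
  let K := compactCovering Z
  have hsep : ∀ᶠ φ : C(Z, X) in residual _, ∀ G ∈ 𝒢, ∀ U ∈ 𝒰, ∀ m n,
      ∀ z ∈ K m ∩ U, ∀ w ∈ K n \ U, (φ z, φ w) ∈ G := by
    rw [eventually_countable_ball hcount]
    intro G hG
    rw [eventually_countable_ball hcount']
    intro U hU
    rw [eventually_countable_forall]
    intro m
    rw [eventually_countable_forall]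
    intro n
    have hK (n) : IsCompact (K n) := isCompact_compactCovering Z n
    refine residual_of_dense_open (isOpen_setOf_forall_isCompact_mem
      ((hK m).inter_right (hclopen hU).isClosed) ((hK n).diff (hclopen hU).isOpen) (hopen G hG)) ?_
    exact (dense_setOf_forall_mem_notMem_of_isClopen hZ
      (residual_of_dense_open (hopen G hG) (hdense G hG)) (hclopen hU)).mono
      fun φ (hφ : ∀ z ∈ U, ∀ w ∉ U, (φ z, φ w) ∈ G) z hz w hw => hφ z hz.2 w hw.2
  filter_upwards [hsep] with φ hφ z w hzw
  refine h𝒢 fun G hG => ?_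
  obtain ⟨U, hU, hzU, hUw⟩ := hbasis.mem_nhds_iff.1 (isOpen_ne.mem_nhds hzw)
  obtain ⟨m, hm⟩ := exists_mem_compactCovering z
  obtain ⟨n, hn⟩ := exists_mem_compactCovering w
  exact hφ G hG U hU m n z ⟨hm, hzU⟩ w ⟨hn, fun hwU => hUw hwU rfl⟩

theorem eventually_residual_denseRange [TopologicalSpace X] [IsCompletelyMetrizableSpace X]
    [SecondCountableTopology X] [T2Space Z] [LocallyCompactSpace Z] [TotallyDisconnectedSpace Z]
    [NoncompactSpace Z] : ∀ᶠ φ : C(Z, X) in residual _, DenseRange φ := by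
  classical
  have hmeet : ∀ᶠ φ : C(Z, X) in residual _, ∀ V ∈ countableBasis X, ∃ z, φ z ∈ V := by
    rw [eventually_countable_ball (countable_countableBasis X)]
    intro V hV
    obtain ⟨v, hv⟩ := nonempty_of_mem_countableBasis hV
    let := upgradeIsCompletelyMetrizable X
    refine residual_of_dense_open ?_ (dense_of_forall_isCompact_uniformity fun φ K hK E hE => ?_)
    · rw [ofPred_exists]
      exact isOpen_iUnion fun z =>
        (isOpen_of_mem_countableBasis hV).preimage (continuous_eval_const z)
    · obtain ⟨z, hz⟩ := (ne_univ_iff_exists_notMem K).1 hK.ne_univ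
      obtain ⟨U, hU, hzU, hUK⟩ := loc_compact_Haus_tot_disc_of_zero_dim.mem_nhds_iff.1
        (hK.isClosed.isOpen_compl.mem_nhds hz)
      refine ⟨⟨U.piecewise (fun _ => v) φ,
        continuous_piecewise_of_isClopen hU continuous_const φ.continuous⟩,
        ⟨z, by simpa [hzU] using hv⟩, fun w hw => ?_⟩
      have hwU : w ∉ U := fun hwU => hUK hwU hw
      simpa [hwU] using refl_mem_uniformity hE
  filter_upwards [hmeet] with φ hφ
  refine (isBasis_countableBasis X).dense_iff.2 fun V hV _ => ?_
  obtain ⟨z, hz⟩ := hφ V hV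
  exact ⟨φ z, hz, mem_range_self z⟩

theorem exists_denseRange_pairwise_mem_of_residual [TopologicalSpace X] [PolishSpace X] [Nonempty X]
    [T2Space Z] [LocallyCompactSpace Z] [TotallyDisconnectedSpace Z]
    [SecondCountableTopology Z] [NoncompactSpace Z] {R : Set (X × X)}
    (hR : R ∈ residual (X × X)) :
    ∃ φ : C(Z, X), DenseRange φ ∧ Pairwise fun z w => (φ z, φ w) ∈ R := by
  let := upgradeIsCompletelyMetrizable X
  have : Nonempty C(Z, X) := ⟨.const Z (Classical.arbitrary X)⟩
  have hgeneric : ∀ᶠ φ : C(Z, X) in residual _,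
      DenseRange φ ∧ Pairwise fun z w => (φ z, φ w) ∈ R :=
    eventually_residual_denseRange.and (eventually_residual_pairwise_mem hR)
  exact (dense_of_mem_residual hgeneric).nonempty

end Mycielski

end

theorem dense_beta_scrambled_of_weaklyMixing_general {X : Type*} [EMetricSpace X] [PolishSpace X]
    [Nontrivial X] {f : X → X} (hf : Continuous f) (hwm : WeaklyMixing f) :
    ∃ S : ℕ → Set X,
      (∀ i j, i ≠ j → Disjoint (S i) (S j)) ∧
      (∀ j, IsCantorSet (S j)) ∧
      (∀ j, ∀ x ∈ S j, TotallyTransitivePoint f x) ∧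
      Dense (⋃ j, S j) ∧
      (∀ n : ℕ, 1 ≤ n → ∀ x ∈ ⋃ j, S j, ∀ y ∈ ⋃ j, S j, x ≠ y →
        atTop.liminf (fun k : ℕ => edist (f^[n * k] x) (f^[n * k] y)) = 0 ∧
        Metric.ediam (Set.univ : Set X) ≤
          atTop.limsup (fun k : ℕ => edist (f^[n * k] x) (f^[n * k] y))) := by
  obtain ⟨φ, hdense, hφ⟩ := exists_denseRange_pairwise_mem_of_residual (Z := ℕ × (ℕ → Bool))
    ((hwm.totallyTransitive_prodMap hf).eventually_residual (hf.prodMap hf))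
  have hinj : Function.Injective φ := fun z w h => by_contra fun hzw => (hφ hzw).ne_of_prodMap h
  have hunion : ⋃ j, Set.range (fun σ => φ (j, σ)) = Set.range φ := by
    ext x; simp
  refine ⟨fun j => Set.range fun σ => φ (j, σ), fun i j hij => ?_, fun j => ?_, ?_, ?_, ?_⟩
  · rw [Set.disjoint_left]
    rintro - ⟨σ, rfl⟩ ⟨τ, h⟩
    exact hij (congrArg Prod.fst (hinj h)).symm
  · exact isCantorSet_range (by fun_prop) (hinj.comp (Prod.mk_right_injective j))
  · rintro j - ⟨σ, rfl⟩
    obtain ⟨w, hw⟩ := exists_ne (j, σ)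
    exact (hφ hw.symm).of_prodMap_left
  · rwa [hunion]
  · rw [hunion]
    rintro n hn - ⟨z, rfl⟩ - ⟨w, rfl⟩ hzw
    have h := hφ (ne_of_apply_ne φ hzw)
    exact ⟨h.liminf_edist_eq_zero hf hwm.denseRange hn,
      h.ediam_le_limsup_edist hf hwm.denseRange hn⟩

theorem dense_beta_scrambled_of_weaklyMixing {X : Type*} [MetricSpace X] [Infinite X]
    [TopologicalSpace.SeparableSpace X] [LocallyCompactSpace X]
    (f : X → X) (hf : Continuous f) (hwm : WeaklyMixing f)
    (β : ℝ≥0∞) (hβ : β = EMetric.diam (Set.univ : Set X)) :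
    ∃ S : ℕ → Set X,
      (∀ i j, i ≠ j → Disjoint (S i) (S j)) ∧
      (∀ j, IsCantorSet (S j)) ∧
      (∀ j, ∀ x ∈ S j, TotallyTransitivePoint f x) ∧
      Dense (⋃ j, S j) ∧
      (∀ n : ℕ, 1 ≤ n → ∀ x ∈ ⋃ j, S j, ∀ y ∈ ⋃ j, S j, x ≠ y →
        atTop.liminf (fun k : ℕ => edist (f^[n * k] x) (f^[n * k] y)) = 0 ∧
        β ≤ atTop.limsup (fun k : ℕ => edist (f^[n * k] x) (f^[n * k] y))) := by
  have : SecondCountableTopology X := UniformSpace.secondCountable_of_separable X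
  have := polishSpace_of_locallyCompactSpace X
  subst hβ
  exact dense_beta_scrambled_of_weaklyMixing_general hf hwm
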